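/- arXiv:0907.0684 — 2 statements merged into one kernel-verified Lean document; each statement's English description precedes it below -/
import Mathlib

section
/- There are exactly two pairs (X₁, X₂) of positive real numbers satisfying the Einstein system with parameters γ₁ = 5/9, γ₂ = 1/9, b₁ = 1/36, b₂ = 1/4, r = 1/2. (This is the algebraic content of the theorem: the bisymmetric fibration of Type II corresponding to the triple (𝔢₇, 𝔰𝔬₁₂ ⊕ 𝔰𝔲₂, 𝔰𝔬₆ ⊕ 𝔰𝔬₆ ⊕ ℝ) admits, up to homothety, exactly two Einstein adapted metrics.) -/
/-- The Einstein system (E1)–(E2) for a Type II bisymmetric fibration,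
in unknowns `X₁ X₂` with parameters `γ₁ γ₂ b₁ b₂ r`. -/
def EinsteinSystem (γ₁ γ₂ b₁ b₂ r X₁ X₂ : ℝ) : Prop :=
  2*γ₁*X₁^2*X₂ + (1-γ₁)*X₂ - 2*γ₂*X₁*X₂^2 - (1-γ₂)*X₁ = 0 ∧
  2*b₁*X₂ + 2*b₂*X₁ - 4*r*X₁*X₂ + 2*γ₁*X₁^2*X₂ + (1-γ₁)*X₂ = 0

/-!
Equation (E2) is linear in `X₂` and gives `X₂ = 2 b₂ X₁ / D(X₁)` for a quadratic `D`. Substituting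
this in (E1) leaves a quartic in `X₁`, so the positive solutions of the system correspond to the
positive roots of the quartic at which `D` is positive. For the given parameters `D` is positive
exactly on `(3/10, 3/2)`. There the quartic starts positive, decreases to a negative value at `1`,
stays negative up to `6/5`, and then increases to a positive value, so it has exactly two roots.
-/

open Set

section LevelSets

variable {α δ : Type*} [ConditionallyCompleteLinearOrder α] [DenselyOrdered α]
  [TopologicalSpace α] [OrderTopology α]
  [LinearOrder δ] [TopologicalSpace δ] [OrderClosedTopology δ]
  {f : α → δ} {a b c d : α} {y : δ}

theorem existsUnique_mem_Ioo_eq_of_strictMonoOn (hab : a ≤ b) (hf : ContinuousOn f (Icc a b))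
    (hmono : StrictMonoOn f (Icc a b)) (ha : f a < y) (hb : y < f b) :
    ∃! x, x ∈ Ioo a b ∧ f x = y := by
  obtain ⟨x, hx, hfx⟩ := intermediate_value_Ioo hab hf ⟨ha, hb⟩
  exact ⟨x, ⟨hx, hfx⟩, fun z hz =>
    hmono.injOn (Ioo_subset_Icc_self hz.1) (Ioo_subset_Icc_self hx) (hz.2.trans hfx.symm)⟩

theorem existsUnique_mem_Ioo_eq_of_strictAntiOn (hab : a ≤ b) (hf : ContinuousOn f (Icc a b))
    (hanti : StrictAntiOn f (Icc a b)) (ha : y < f a) (hb : f b < y) :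
    ∃! x, x ∈ Ioo a b ∧ f x = y :=
  existsUnique_mem_Ioo_eq_of_strictMonoOn (δ := δᵒᵈ) hab hf hanti.dual_right ha hb

theorem ncard_levelSet_Ioo_eq_two (hac : a ≤ c) (hcd : c ≤ d) (hdb : d ≤ b)
    (hf : ContinuousOn f (Icc a b)) (hanti : StrictAntiOn f (Icc a c))
    (hlt : ∀ x ∈ Icc c d, f x < y) (hmono : StrictMonoOn f (Icc d b))
    (ha : y < f a) (hb : y < f b) : {x ∈ Ioo a b | f x = y}.ncard = 2 := by
  obtain ⟨p, ⟨hp, hfp⟩, hp_unique⟩ := existsUnique_mem_Ioo_eq_of_strictAntiOn hac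
    (hf.mono (Icc_subset_Icc_right (hcd.trans hdb))) hanti ha (hlt c (left_mem_Icc.2 hcd))
  obtain ⟨q, ⟨hq, hfq⟩, hq_unique⟩ := existsUnique_mem_Ioo_eq_of_strictMonoOn hdb
    (hf.mono (Icc_subset_Icc_left (hac.trans hcd))) hmono (hlt d (right_mem_Icc.2 hcd)) hb
  have hpq : p < q := hp.2.trans_le (hcd.trans hq.1.le)
  refine ncard_eq_two.2 ⟨p, q, hpq.ne, Subset.antisymm ?_ (pair_subset ?_ ?_)⟩
  · rintro x ⟨hx, hfx⟩
    rcases lt_or_ge x c with hxc | hcx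
    · exact Or.inl (hp_unique x ⟨⟨hx.1, hxc⟩, hfx⟩)
    · have hdx : d < x := lt_of_not_ge fun hxd => (hlt x ⟨hcx, hxd⟩).ne hfx
      exact Or.inr (hq_unique x ⟨⟨hdx, hx.2⟩, hfx⟩)
  · exact ⟨⟨hp.1, hpq.trans hq.2⟩, hfp⟩
  · exact ⟨⟨hp.1.trans hpq, hq.2⟩, hfq⟩

end LevelSets

section Elimination

/-- The quadratic `D` for which (E2) reads `X₂ * D(X₁) = 2 * b₂ * X₁`. -/
def einsteinDenom (γ₁ b₁ r x : ℝ) : ℝ :=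
  4 * r * x - 2 * γ₁ * x ^ 2 - (1 - γ₁) - 2 * b₁

/-- The quartic in `X₁` obtained by eliminating `X₂` from the Einstein system: for
`X₂ = 2 * b₂ * X₁ / D(X₁)` it is `-D(X₁) ^ 2 / X₁` times the left-hand side of (E1). -/
def einsteinEliminant (γ₁ γ₂ b₁ b₂ r x : ℝ) : ℝ :=
  (1 - γ₂) * einsteinDenom γ₁ b₁ r x ^ 2 + 8 * γ₂ * b₂ ^ 2 * x ^ 2 -
    2 * b₂ * (2 * γ₁ * x ^ 2 + (1 - γ₁)) * einsteinDenom γ₁ b₁ r x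

variable {γ₁ γ₂ b₁ b₂ r x y : ℝ}

theorem EinsteinSystem.mul_einsteinDenom (h : EinsteinSystem γ₁ γ₂ b₁ b₂ r x y) :
    y * einsteinDenom γ₁ b₁ r x = 2 * b₂ * x := by
  unfold einsteinDenom
  linear_combination -h.2

theorem einsteinSystem_iff (hx : x ≠ 0) (hD : einsteinDenom γ₁ b₁ r x ≠ 0) :
    EinsteinSystem γ₁ γ₂ b₁ b₂ r x y ↔
      einsteinEliminant γ₁ γ₂ b₁ b₂ r x = 0 ∧ 2 * b₂ * x / einsteinDenom γ₁ b₁ r x = y := by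
  have hE₁ (hy : y * einsteinDenom γ₁ b₁ r x = 2 * b₂ * x) :
      (2 * γ₁ * x ^ 2 * y + (1 - γ₁) * y - 2 * γ₂ * x * y ^ 2 - (1 - γ₂) * x) *
        einsteinDenom γ₁ b₁ r x ^ 2 = -x * einsteinEliminant γ₁ γ₂ b₁ b₂ r x := by
    unfold einsteinEliminant
    linear_combination ((2 * γ₁ * x ^ 2 + (1 - γ₁)) * einsteinDenom γ₁ b₁ r x -
      2 * γ₂ * x * (y * einsteinDenom γ₁ b₁ r x + 2 * b₂ * x)) * hy
  rw [div_eq_iff hD]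
  constructor
  · intro h
    have hmul := hE₁ h.mul_einsteinDenom
    rw [h.1, zero_mul, eq_comm, mul_eq_zero] at hmul
    exact ⟨hmul.resolve_left (neg_ne_zero.2 hx), h.mul_einsteinDenom.symm⟩
  · rintro ⟨helim, hy⟩
    have hmul := hE₁ hy.symm
    rw [helim, mul_zero, mul_eq_zero] at hmul
    refine ⟨hmul.resolve_right (pow_ne_zero 2 hD), ?_⟩
    unfold einsteinDenom at hy
    linear_combination hy

theorem setOf_pos_einsteinSystem_eq_graphOn (hb₂ : 0 < b₂) :
    {P : ℝ × ℝ | 0 < P.1 ∧ 0 < P.2 ∧ EinsteinSystem γ₁ γ₂ b₁ b₂ r P.1 P.2} =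
      {x | 0 < x ∧ 0 < einsteinDenom γ₁ b₁ r x ∧ einsteinEliminant γ₁ γ₂ b₁ b₂ r x = 0}.graphOn
        fun x => 2 * b₂ * x / einsteinDenom γ₁ b₁ r x := by
  ext ⟨x, y⟩
  simp only [mem_graphOn, mem_ofPred_eq]
  constructor
  · rintro ⟨hx, hy, h⟩
    have hD : 0 < einsteinDenom γ₁ b₁ r x :=
      pos_of_mul_pos_right (h.mul_einsteinDenom ▸ by positivity) hy.le
    obtain ⟨helim, hy_eq⟩ := (einsteinSystem_iff hx.ne' hD.ne').1 h
    exact ⟨⟨hx, hD, helim⟩, hy_eq⟩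
  · rintro ⟨⟨hx, hD, helim⟩, rfl⟩
    exact ⟨hx, by positivity, (einsteinSystem_iff hx.ne' hD.ne').2 ⟨helim, rfl⟩⟩

end Elimination

/-- The eliminant of the Einstein system of the triple `(𝔢₇, 𝔰𝔬₁₂ ⊕ 𝔰𝔲₂, 𝔰𝔬₆ ⊕ 𝔰𝔬₆ ⊕ ℝ)`, scaled
by `729` to have integer coefficients. -/
def e7Quartic (x : ℝ) : ℝ :=
  1250 * x ^ 4 - 3690 * x ^ 3 + 3735 * x ^ 2 - 1620 * x + 243

theorem einsteinEliminant_e7 (x : ℝ) :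
    einsteinEliminant (5 / 9) (1 / 9) (1 / 36) (1 / 4) (1 / 2) x = e7Quartic x / 729 := by
  unfold einsteinEliminant einsteinDenom e7Quartic
  ring

theorem einsteinDenom_e7_pos_iff (x : ℝ) :
    0 < einsteinDenom (5 / 9) (1 / 36) (1 / 2) x ↔ x ∈ Ioo (3 / 10) (3 / 2) := by
  have hfactor : einsteinDenom (5 / 9) (1 / 36) (1 / 2) x =
      10 / 9 * ((x - 3 / 10) * (3 / 2 - x)) := by
    unfold einsteinDenom
    ring
  rw [hfactor, mem_Ioo]
  constructor
  · intro h
    constructor <;> nlinarith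
  · rintro ⟨hl, hu⟩
    have := sub_pos.2 hl
    have := sub_pos.2 hu
    positivity

theorem continuous_e7Quartic : Continuous e7Quartic := by
  unfold e7Quartic
  fun_prop

-- The derivative has a local maximum near `13 / 25`, with a small negative value; splitting off the
-- square there makes the signs on both sides of its only zero visible.
theorem deriv_e7Quartic (x : ℝ) :
    deriv e7Quartic x =
      5000 * (x - 13 / 25) ^ 2 * (x - 587 / 500) + (66 / 5 * x - 4094 / 125) := by
  have h : HasDerivAt e7Quartic _ x :=
    (((((hasDerivAt_id x).pow 4).const_mul 1250).sub
      (((hasDerivAt_id x).pow 3).const_mul 3690)).add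
      (((hasDerivAt_id x).pow 2).const_mul 3735)).sub
      ((hasDerivAt_id x).const_mul 1620) |>.add_const 243
  rw [h.deriv]
  simp only [id]
  ring

theorem strictAntiOn_e7Quartic : StrictAntiOn e7Quartic (Iic 1) := by
  refine strictAntiOn_of_deriv_neg (convex_Iic 1) continuous_e7Quartic.continuousOn fun x hx => ?_
  rw [interior_Iic, mem_Iio] at hx
  rw [deriv_e7Quartic]
  have hcubic : 5000 * (x - 13 / 25) ^ 2 * (x - 587 / 500) ≤ 0 :=
    mul_nonpos_of_nonneg_of_nonpos (by positivity) (by linarith)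
  linarith

theorem strictMonoOn_e7Quartic : StrictMonoOn e7Quartic (Ici (6 / 5)) := by
  refine strictMonoOn_of_deriv_pos (convex_Ici _) continuous_e7Quartic.continuousOn fun x hx => ?_
  rw [interior_Ici, mem_Ioi] at hx
  rw [deriv_e7Quartic]
  have hcubic : 5000 * (6 / 5 - 13 / 25) ^ 2 * (6 / 5 - 587 / 500) ≤
      5000 * (x - 13 / 25) ^ 2 * (x - 587 / 500) := by
    gcongr
  linarith

theorem e7Quartic_neg_of_mem_Icc {x : ℝ} (hx : x ∈ Icc 1 (6 / 5)) : e7Quartic x < 0 := by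
  have hdivision : e7Quartic x =
      (x - 1) * (x - 6 / 5) * (1250 * x ^ 2 - 940 * x + 167) + (213 / 5 - 623 / 5 * x) := by
    unfold e7Quartic
    ring
  obtain ⟨hl, hu⟩ := hx
  have hprod : (x - 1) * (x - 6 / 5) ≤ 0 :=
    mul_nonpos_of_nonneg_of_nonpos (sub_nonneg.2 hl) (sub_nonpos.2 hu)
  have hquot : 0 ≤ 1250 * x ^ 2 - 940 * x + 167 := by nlinarith
  linarith [mul_nonpos_of_nonpos_of_nonneg hprod hquot]

theorem ncard_zeros_e7Quartic : {x ∈ Ioo (3 / 10) (3 / 2) | e7Quartic x = 0}.ncard = 2 :=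
  ncard_levelSet_Ioo_eq_two (c := 1) (d := 6 / 5) (by norm_num) (by norm_num) (by norm_num)
    continuous_e7Quartic.continuousOn (strictAntiOn_e7Quartic.mono Icc_subset_Iic_self)
    (fun _ => e7Quartic_neg_of_mem_Icc) (strictMonoOn_e7Quartic.mono Icc_subset_Ici_self)
    (by norm_num [e7Quartic]) (by norm_num [e7Quartic])

/- STATEMENT 7: exactly two positive solutions for (𝔢₇, 𝔰𝔬₁₂⊕𝔰𝔲₂, 𝔰𝔬₆⊕𝔰𝔬₆⊕ℝ). -/
theorem e7_p6_exactly_two_einstein_adapted_metrics :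
    {P : ℝ × ℝ | 0 < P.1 ∧ 0 < P.2 ∧
      EinsteinSystem (5/9) (1/9) (1/36) (1/4) (1/2) P.1 P.2}.ncard = 2 := by
  have hroots : {x : ℝ | 0 < x ∧ 0 < einsteinDenom (5 / 9) (1 / 36) (1 / 2) x ∧
      einsteinEliminant (5 / 9) (1 / 9) (1 / 36) (1 / 4) (1 / 2) x = 0} =
      {x ∈ Ioo (3 / 10) (3 / 2) | e7Quartic x = 0} := by
    ext x
    simp only [mem_ofPred_eq, einsteinDenom_e7_pos_iff, einsteinEliminant_e7, div_eq_zero_iff,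
      OfNat.ofNat_ne_zero, or_false]
    exact and_iff_right_of_imp fun h => lt_trans (by norm_num) h.1.1
  rw [setOf_pos_einsteinSystem_eq_graphOn (by norm_num), hroots, ncard_graphOn,
    ncard_zeros_e7Quartic]
end

section
/- Let 0 < γ₁ < 1 and set γ₂ = 1 − γ₁, b₁ = γ₁/4, b₂ = (1−γ₁)/4, r = 1/2. Then the pair (X₁, X₂) = (1/(2γ₁), 1/(2(1−γ₁))) is the unique pair of positive reals satisfying the Einstein system together with the constraint (1−γ₁)X₂ = γ₁X₁. (This is the algebraic content of the theorem producing, for γ₁ = l/(l+s), the Einstein adapted metric g = (2l/(l+s))B_{𝔭₁} ⊕ (2s/(l+s))B_{𝔭₂} ⊕ B_𝔫, i.e. (X₁,X₂) = ((l+s)/(2l), (l+s)/(2s)), on the bisymmetric fibration corresponding to the triple (𝔰𝔲_{2(l+s)}, 𝔰𝔲_{2l} ⊕ 𝔰𝔲_{2s} ⊕ ℝ, 𝔰𝔲_l ⊕ 𝔰𝔲_l ⊕ 𝔰𝔲_s ⊕ 𝔰𝔲_s ⊕ ℝ³); here the discriminant D = 4r² − 4b₁γ₁ − 4b₂(1−γ₁)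 − 2γ₁(1−γ₁) vanishes identically.) -/
/-!
When `γ₂ = 1 - γ₁`, equation (E1) factors as `(γ₁ X₁ - (1 - γ₁) X₂) (2 X₁ X₂ - 1) = 0`. On the
branch `(1 - γ₁) X₂ = γ₁ X₁`, equation (E2) is, up to the factor `X₁`, a quadratic equation in
`γ₁ X₁`; completing the square gives `(2 γ₁ X₁ - 2 r)² = D`. For the given parameters `D = 0`,
so `γ₁ X₁ = r = 1/2` is a double root.
-/

/-- The discriminant `D` of the quadratic equation that (E2) imposes on `γ₁ X₁` along the branch
`(1 - γ₁) X₂ = γ₁ X₁`, when `γ₂ = 1 - γ₁`. It is normalized as a quarter of the discriminant of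
`2 t² - 4 r t + (2 b₁ γ₁ + 2 b₂ (1 - γ₁) + γ₁ (1 - γ₁))`. -/
def einsteinDiscrim (γ₁ b₁ b₂ r : ℝ) : ℝ :=
  4 * r ^ 2 - 4 * b₁ * γ₁ - 4 * b₂ * (1 - γ₁) - 2 * γ₁ * (1 - γ₁)

theorem einsteinDiscrim_su (γ₁ : ℝ) :
    einsteinDiscrim γ₁ (γ₁ / 4) ((1 - γ₁) / 4) (1 / 2) = 0 := by
  unfold einsteinDiscrim
  ring

section

variable {γ₁ b₁ b₂ r X₁ X₂ : ℝ}

theorem einsteinSystem_one_sub_iff :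
    EinsteinSystem γ₁ (1 - γ₁) b₁ b₂ r X₁ X₂ ↔
      ((1 - γ₁) * X₂ = γ₁ * X₁ ∨ 2 * X₁ * X₂ = 1) ∧
        2 * b₁ * X₂ + 2 * b₂ * X₁ - 4 * r * X₁ * X₂ + 2 * γ₁ * X₁ ^ 2 * X₂ + (1 - γ₁) * X₂ = 0 := by
  have factor : 2 * γ₁ * X₁ ^ 2 * X₂ + (1 - γ₁) * X₂ - 2 * (1 - γ₁) * X₁ * X₂ ^ 2
      - (1 - (1 - γ₁)) * X₁ = ((1 - γ₁) * X₂ - γ₁ * X₁) * (1 - 2 * X₁ * X₂) := by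
    ring
  rw [EinsteinSystem, factor, mul_eq_zero, sub_eq_zero, sub_eq_zero, eq_comm (a := (1 : ℝ))]

theorem einsteinSystem_iff_sq_eq_discrim (hγ : γ₁ ≠ 1) (hX₁ : X₁ ≠ 0)
    (hc : (1 - γ₁) * X₂ = γ₁ * X₁) :
    EinsteinSystem γ₁ (1 - γ₁) b₁ b₂ r X₁ X₂ ↔
      (2 * (γ₁ * X₁) - 2 * r) ^ 2 = einsteinDiscrim γ₁ b₁ b₂ r := by
  have complete_square :
      2 * (1 - γ₁) * (2 * b₁ * X₂ + 2 * b₂ * X₁ - 4 * r * X₁ * X₂ + 2 * γ₁ * X₁ ^ 2 * X₂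
        + (1 - γ₁) * X₂) = X₁ * ((2 * (γ₁ * X₁) - 2 * r) ^ 2 - einsteinDiscrim γ₁ b₁ b₂ r) := by
    unfold einsteinDiscrim
    linear_combination (4 * b₁ - 8 * r * X₁ + 4 * γ₁ * X₁ ^ 2 + 2 * (1 - γ₁)) * hc
  have hγ' : 2 * (1 - γ₁) ≠ 0 := mul_ne_zero two_ne_zero (sub_ne_zero.mpr hγ.symm)
  rw [einsteinSystem_one_sub_iff, and_iff_right (Or.inl hc), ← mul_eq_zero_iff_left hγ',
    complete_square, mul_eq_zero_iff_left hX₁, sub_eq_zero]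

theorem einsteinSystem_iff_of_discrim_eq_zero (hγ0 : γ₁ ≠ 0) (hγ1 : γ₁ ≠ 1) (hr : r ≠ 0)
    (hD : einsteinDiscrim γ₁ b₁ b₂ r = 0) :
    X₁ ≠ 0 ∧ EinsteinSystem γ₁ (1 - γ₁) b₁ b₂ r X₁ X₂ ∧ (1 - γ₁) * X₂ = γ₁ * X₁ ↔
      X₁ = r / γ₁ ∧ X₂ = r / (1 - γ₁) := by
  have hγ2 : 1 - γ₁ ≠ 0 := sub_ne_zero.mpr hγ1.symm
  rw [eq_div_iff hγ0, eq_div_iff hγ2, mul_comm X₁, mul_comm X₂]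
  constructor
  · rintro ⟨hX₁, hE, hc⟩
    have double_root : (2 * (γ₁ * X₁) - 2 * r) ^ 2 = 0 :=
      ((einsteinSystem_iff_sq_eq_discrim hγ1 hX₁ hc).mp hE).trans hD
    have hroot : γ₁ * X₁ = r :=
      mul_left_cancel₀ two_ne_zero (sub_eq_zero.mp (sq_eq_zero_iff.mp double_root))
    exact ⟨hroot, hc.trans hroot⟩
  · rintro ⟨h₁, h₂⟩
    have hX₁ : X₁ ≠ 0 := right_ne_zero_of_mul (h₁.trans_ne hr)
    have hc : (1 - γ₁) * X₂ = γ₁ * X₁ := h₂.trans h₁.symm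
    refine ⟨hX₁, (einsteinSystem_iff_sq_eq_discrim hγ1 hX₁ hc).mpr ?_, hc⟩
    rw [hD, h₁, sub_self, sq, zero_mul]

theorem einstein_system_su_unique_solution_general (hγ0 : 0 < γ₁) (hγ1 : γ₁ < 1) (hr : 0 < r)
    (hD : einsteinDiscrim γ₁ b₁ b₂ r = 0) :
    (0 < X₁ ∧ 0 < X₂ ∧
      EinsteinSystem γ₁ (1 - γ₁) b₁ b₂ r X₁ X₂ ∧
      (1 - γ₁) * X₂ = γ₁ * X₁)
    ↔ (X₁ = r / γ₁ ∧ X₂ = r / (1 - γ₁)) := by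
  have nonzero_solution := einsteinSystem_iff_of_discrim_eq_zero (X₁ := X₁) (X₂ := X₂)
    hγ0.ne' hγ1.ne hr.ne' hD
  constructor
  · rintro ⟨hX₁, -, hE, hc⟩
    exact nonzero_solution.mp ⟨hX₁.ne', hE, hc⟩
  · intro hX
    obtain ⟨-, hE, hc⟩ := nonzero_solution.mpr hX
    exact ⟨hX.1 ▸ div_pos hr hγ0, hX.2 ▸ div_pos hr (sub_pos.mpr hγ1), hE, hc⟩

end

/- STATEMENT 12: for 0 < γ₁ < 1, γ₂ = 1 − γ₁, b₁ = γ₁/4, b₂ = (1−γ₁)/4, r = 1/2,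
the pair (X₁, X₂) = (1/(2γ₁), 1/(2(1−γ₁))) is the unique positive solution of the
Einstein system subject to the constraint (1−γ₁)X₂ = γ₁X₁. -/
theorem einstein_system_su_unique_solution
    (γ₁ : ℝ) (hγ0 : 0 < γ₁) (hγ1 : γ₁ < 1) :
    ∀ X₁ X₂ : ℝ,
      (0 < X₁ ∧ 0 < X₂ ∧
        EinsteinSystem γ₁ (1-γ₁) (γ₁/4) ((1-γ₁)/4) (1/2) X₁ X₂ ∧
        (1-γ₁)*X₂ = γ₁*X₁)
      ↔ (X₁ = 1/(2*γ₁) ∧ X₂ = 1/(2*(1-γ₁))) := by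
  intro X₁ X₂
  simpa only [div_div] using
    einstein_system_su_unique_solution_general hγ0 hγ1 one_half_pos (einsteinDiscrim_su γ₁)
end
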